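/- Let n ≥ 1, α ∈ (0,1), T > 0, let c : ℝⁿ → ℝ be smooth with c(x) ≥ c₀ for some constant c₀ > 0, and let a : ℝⁿ → ℝ be smooth with a ≥ 0. Let u : ℝ × ℝⁿ → ℝ be smooth, suppose there is a compact set K ⊆ ℝⁿ with supp u(t,·) ⊆ K for all t ∈ [0,T], and suppose u satisfies the fractional wave equation ∂_t² u − c(x)² Δu + a(x) ∂_t^α u = 0 on (0,T) × ℝⁿ. Then the system is dissipative: E(T) ≤ E(0). -/

import Mathlib

open MeasureTheory Set

/-- Partial derivative `∂f/∂xᵢ` of `f : ℝⁿ → ℝ` at `x`. -/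
noncomputable def partialD {n : ℕ} (f : (Fin n → ℝ) → ℝ) (i : Fin n) (x : Fin n → ℝ) : ℝ :=
  deriv (fun s => f (Function.update x i s)) (x i)

/-- Second partial derivative `∂²f/∂xᵢ²` of `f : ℝⁿ → ℝ` at `x`. -/
noncomputable def secondPartial {n : ℕ} (f : (Fin n → ℝ) → ℝ) (i : Fin n) (x : Fin n → ℝ) : ℝ :=
  deriv (fun s => deriv (fun r => f (Function.update x i r)) s) (x i)

/-- The Laplacian of `f : ℝⁿ → ℝ`, i.e. the sum of the second partial derivatives. -/
noncomputable def laplacian {n : ℕ} (f : (Fin n → ℝ) → ℝ) (x : Fin n → ℝ) : ℝ :=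
  ∑ i, secondPartial f i x

/-- The Caputo fractional derivative of order `α`:
`∂_t^α f(t) = (1/Γ(1-α)) ∫₀^t (t-s)^{-α} f'(s) ds`. -/
noncomputable def caputo (α : ℝ) (f : ℝ → ℝ) (t : ℝ) : ℝ :=
  (1 / Real.Gamma (1 - α)) * ∫ s in (0:ℝ)..t, (t - s) ^ (-α) * deriv f s

/-- The energy `E(t) = ∫ (c⁻² |∂_t u|² + |∇ₓ u|²) dx`. -/
noncomputable def energy {n : ℕ} (c : (Fin n → ℝ) → ℝ) (u : ℝ → (Fin n → ℝ) → ℝ) (t : ℝ) : ℝ :=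
  ∫ x, (((c x) ^ 2)⁻¹ * (deriv (fun s => u s x) t) ^ 2 + ∑ i, (partialD (u t) i x) ^ 2)

/-!
The energy density `e = c⁻² (∂ₜu)² + |∇u|²` satisfies the local balance
`∂ₜe = 2 div (∂ₜu ∇u) - 2 c⁻² a ∂ₜu ∂_t^α u`. The divergence integrates to zero over space, so it
suffices that `∫₀ᵀ v (k ∗ v) ≥ 0` for `v = ∂ₜu` and the Caputo kernel `k r = r ^ (-α)`. For a
decaying exponential kernel this holds because `y = k ∗ v` solves `y' + l y = v`, so that
`v y = (y² / 2)' + l y²`. In general, `Γ(α) r ^ (-α) = ∫₀^∞ l ^ (α - 1) exp (-r l) dl` is a positive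
superposition of such kernels, which is harmless since the quadratic form is linear in `k`: it pairs
`k` with the autocorrelation of `v`.
-/

/-- A kernel `k` on `(0, ∞)` is of positive type (in the sense of Volterra equations) if the
quadratic form `∫₀ᵀ v (k ∗ v)` of its causal convolution is nonnegative for every `T > 0`.
Only continuous `v` are tested, which is no restriction for kernels integrable near `0`. -/
def IsPositiveType (k : ℝ → ℝ) : Prop :=
  ∀ v : ℝ → ℝ, Continuous v → ∀ T : ℝ, 0 < T →
    0 ≤ ∫ t in (0 : ℝ)..T, v t * ∫ s in (0 : ℝ)..t, k (t - s) * v s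

/-- The autocorrelation at lag `r` of the restriction of `v` to `[0, T]`. -/
noncomputable def autocorrelation (v : ℝ → ℝ) (T r : ℝ) : ℝ :=
  ∫ t in r..T, v t * v (t - r)

lemma IsPositiveType.const_mul {k : ℝ → ℝ} (hk : IsPositiveType k) {b : ℝ} (hb : 0 ≤ b) :
    IsPositiveType fun r => b * k r := by
  intro v hv T hT
  simp only [mul_assoc, intervalIntegral.integral_const_mul, mul_left_comm (v _) b]
  exact mul_nonneg hb (hk v hv T hT)

lemma isPositiveType_exp_neg_mul {l : ℝ} (hl : 0 ≤ l) :
    IsPositiveType fun r => Real.exp (-(r * l)) := by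
  intro v hv T hT
  set y : ℝ → ℝ := fun t => ∫ s in (0 : ℝ)..t, Real.exp (-((t - s) * l)) * v s
  have hy_eq : y = fun t => Real.exp (-(t * l)) * ∫ s in (0 : ℝ)..t, Real.exp (s * l) * v s := by
    ext t
    rw [← intervalIntegral.integral_const_mul]
    refine intervalIntegral.integral_congr fun s _ => ?_
    simp only [← mul_assoc, ← Real.exp_add]
    ring_nf
  -- The convolution `y` solves `y' + l y = v`, so `v y = (y² / 2)' + l y²`.
  have hy_deriv (t : ℝ) : HasDerivAt y (v t - l * y t) t := by
    have hint := intervalIntegral.integral_hasDerivAt_right (a := 0) (b := t)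
      (f := fun s => Real.exp (s * l) * v s) ((by fun_prop : Continuous _).intervalIntegrable _ _)
      (by fun_prop : Continuous _).stronglyMeasurable.stronglyMeasurableAtFilter
      (by fun_prop : Continuous _).continuousAt
    have hexp := ((hasDerivAt_id t).mul_const l).neg.exp
    have hcancel : Real.exp (-(t * l)) * Real.exp (t * l) = 1 := by simp [← Real.exp_add]
    rw [hy_eq]
    convert! hexp.mul hint using 1
    simp only [id_eq]
    linear_combination (-v t) * hcancel
  have hy : Continuous y := continuous_iff_continuousAt.2 fun t => (hy_deriv t).continuousAt
  have hsq (t : ℝ) : HasDerivAt (fun t => y t ^ 2 / 2) (v t * y t - l * y t ^ 2) t := by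
    convert! ((hy_deriv t).pow 2).div_const 2 using 1
    ring
  calc 0 ≤ y T ^ 2 / 2 := by positivity
    _ = ∫ t in (0 : ℝ)..T, (v t * y t - l * y t ^ 2) := by
      rw [intervalIntegral.integral_eq_sub_of_hasDerivAt (fun t _ => hsq t)
        ((by fun_prop : Continuous _).intervalIntegrable _ _)]
      simp [y]
    _ ≤ ∫ t in (0 : ℝ)..T, v t * y t :=
      intervalIntegral.integral_mono_on hT.le
        ((by fun_prop : Continuous _).intervalIntegrable _ _)
        ((by fun_prop : Continuous _).intervalIntegrable _ _)
        fun t _ => sub_le_self _ (by positivity)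

lemma continuous_autocorrelation {v : ℝ → ℝ} (hv : Continuous v) (T : ℝ) :
    Continuous (autocorrelation v T) := by
  have hsymm : autocorrelation v T = fun r => -∫ t in T..r, v t * v (t - r) :=
    funext fun r => intervalIntegral.integral_symm T r
  rw [hsymm]
  exact (intervalIntegral.continuous_parametric_intervalIntegral_of_continuous
    (f := fun r t => v t * v (t - r)) (by fun_prop) continuous_id).neg

lemma intervalIntegral_triangle_swap {E : Type*} [NormedAddCommGroup E] [NormedSpace ℝ E]
    {f : ℝ → ℝ → E} {a b : ℝ} (hab : a ≤ b)
    (hf : IntegrableOn (Function.uncurry f) (Ioc a b ×ˢ Ioc a b)) :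
    ∫ t in a..b, ∫ r in a..t, f t r = ∫ r in a..b, ∫ t in r..b, f t r := by
  let g : ℝ → ℝ → E := fun t r => {p : ℝ × ℝ | p.2 ≤ p.1}.indicator (Function.uncurry f) (t, r)
  have hg : Integrable (Function.uncurry g)
      ((volume.restrict (Ioc a b)).prod (volume.restrict (Ioc a b))) := by
    rw [Measure.prod_restrict]
    exact hf.integrable.indicator (measurableSet_le measurable_snd measurable_fst)
  have hleft : ∀ t ∈ Ioc a b, ∫ r in a..t, f t r = ∫ r in Ioc a b, g t r := by
    intro t ht
    have hinter : Ioc a b ∩ Iic t = Ioc a t := by rw [Ioc_inter_Iic, min_eq_right ht.2]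
    rw [intervalIntegral.integral_of_le ht.1.le, ← hinter]
    exact (setIntegral_indicator measurableSet_Iic).symm
  have hright : ∀ r ∈ Ioc a b, ∫ t in r..b, f t r = ∫ t in Ioc a b, g t r := by
    intro r hr
    have hinter : Ioc a b ∩ Ici r = Icc r b :=
      Set.ext fun t => ⟨fun h => ⟨h.2, h.1.2⟩, fun h => ⟨⟨hr.1.trans_le h.1, h.2⟩, h.1⟩⟩
    rw [intervalIntegral.integral_of_le hr.2, ← integral_Icc_eq_integral_Ioc, ← hinter]
    exact (setIntegral_indicator measurableSet_Ici).symm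
  rw [intervalIntegral.integral_of_le hab, intervalIntegral.integral_of_le hab,
    setIntegral_congr_fun measurableSet_Ioc hleft, setIntegral_congr_fun measurableSet_Ioc hright]
  exact integral_integral_swap hg

lemma integral_mul_convolution_eq_integral_mul_autocorrelation {k v : ℝ → ℝ} {T : ℝ} (hT : 0 ≤ T)
    (hk : IntegrableOn k (Ioc 0 T)) (hv : Continuous v) :
    ∫ t in (0 : ℝ)..T, v t * ∫ s in (0 : ℝ)..t, k (t - s) * v s =
      ∫ r in (0 : ℝ)..T, k r * autocorrelation v T r := by
  have hint : IntegrableOn (fun p : ℝ × ℝ => (v p.1 * v (p.1 - p.2)) * k p.2)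
      (Ioc 0 T ×ˢ Ioc 0 T) := by
    refine IntegrableOn.continuousOn_mul_of_subset (K := Icc 0 T ×ˢ Icc 0 T)
      (by fun_prop) ?_ (isCompact_Icc.prod isCompact_Icc)
      (measurableSet_Ioc.prod measurableSet_Ioc) (prod_mono Ioc_subset_Icc_self Ioc_subset_Icc_self)
    rw [IntegrableOn, Measure.volume_eq_prod, ← Measure.prod_restrict]
    exact hk.integrable.comp_snd _
  calc ∫ t in (0 : ℝ)..T, v t * ∫ s in (0 : ℝ)..t, k (t - s) * v s
      = ∫ t in (0 : ℝ)..T, ∫ r in (0 : ℝ)..t, v t * v (t - r) * k r := by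
        congr with t
        rw [← intervalIntegral.integral_const_mul]
        have := intervalIntegral.integral_comp_sub_left
          (fun s => v t * (k (t - s) * v s)) t (a := 0) (b := t)
        simp only [sub_sub_cancel, sub_self, sub_zero] at this
        rw [← this]
        congr with r
        ring
    _ = ∫ r in (0 : ℝ)..T, ∫ t in r..T, v t * v (t - r) * k r :=
        intervalIntegral_triangle_swap hT hint
    _ = ∫ r in (0 : ℝ)..T, k r * autocorrelation v T r := by
        simp only [intervalIntegral.integral_mul_const, autocorrelation, mul_comm (k _)]

lemma isPositiveType_of_eq_integral {Λ : Type*} [MeasurableSpace Λ] {μ : Measure Λ} [SFinite μ]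
    {k : ℝ → ℝ} {K : ℝ → Λ → ℝ} (hK : ∀ᵐ l ∂μ, IsPositiveType fun r => K r l)
    (hint : ∀ T > 0, Integrable (Function.uncurry K) ((volume.restrict (Ioc 0 T)).prod μ))
    (hk : ∀ r > 0, k r = ∫ l, K r l ∂μ) : IsPositiveType k := by
  intro v hv T hT
  have hk_ae : (fun r => ∫ l, K r l ∂μ) =ᵐ[volume.restrict (Ioc 0 T)] k := by
    filter_upwards [ae_restrict_mem measurableSet_Ioc] with r hr using (hk r hr.1).symm
  have hk_int : IntegrableOn k (Ioc 0 T) := (hint T hT).integral_prod_left.congr hk_ae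
  have hprod : Integrable (fun p : ℝ × Λ => K p.1 p.2 * autocorrelation v T p.1)
      ((volume.restrict (Ioc 0 T)).prod μ) := by
    obtain ⟨C, hC⟩ := isCompact_Icc.exists_bound_of_continuousOn
      (continuous_autocorrelation hv T).continuousOn (s := Icc 0 T)
    refine (hint T hT).mul_bdd (c := C)
      ((continuous_autocorrelation hv T).measurable.comp measurable_fst).aestronglyMeasurable ?_
    refine Measure.quasiMeasurePreserving_fst.ae (p := fun r => ‖autocorrelation v T r‖ ≤ C) ?_
    filter_upwards [ae_restrict_mem measurableSet_Ioc] with r hr using hC r (Ioc_subset_Icc_self hr)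
  have hswap : ∫ t in (0 : ℝ)..T, v t * ∫ s in (0 : ℝ)..t, k (t - s) * v s =
      ∫ l, (∫ r in (0 : ℝ)..T, K r l * autocorrelation v T r) ∂μ := by
    rw [integral_mul_convolution_eq_integral_mul_autocorrelation hT.le hk_int hv]
    simp only [intervalIntegral.integral_of_le hT.le]
    rw [← integral_integral_swap hprod]
    refine integral_congr_ae ?_
    filter_upwards [hk_ae] with r hr
    rw [← hr, integral_mul_const]
  rw [hswap]
  refine integral_nonneg_of_ae ?_
  filter_upwards [hK, (hint T hT).prod_left_ae] with l hl hl_int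
  exact (hl v hv T hT).trans_eq
    (integral_mul_convolution_eq_integral_mul_autocorrelation hT.le hl_int hv)

lemma isPositiveType_rpow_neg {α : ℝ} (hα : α ∈ Ico (0 : ℝ) 1) :
    IsPositiveType fun r => r ^ (-α) := by
  obtain rfl | h0 := hα.1.eq_or_lt
  · simpa using isPositiveType_exp_neg_mul le_rfl
  have hΓ := Real.Gamma_pos_of_pos h0
  let K : ℝ → ℝ → ℝ := fun r l => (Real.Gamma α)⁻¹ * (l ^ (α - 1) * Real.exp (-(r * l)))
  have hpow : ∀ r > 0, ∫ l in Ioi 0, K r l = r ^ (-α) := by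
    intro r hr
    simp only [K]
    rw [integral_const_mul, Real.integral_rpow_mul_exp_neg_mul_Ioi h0 hr, one_div,
      Real.inv_rpow hr.le, Real.rpow_neg hr.le]
    field_simp
  have hnonneg : ∀ r, ∀ l ∈ Ioi 0, 0 ≤ K r l := fun r l hl => by
    have := Real.rpow_nonneg (mem_Ioi.1 hl).le (α - 1)
    positivity
  refine isPositiveType_of_eq_integral (μ := volume.restrict (Ioi 0)) (K := K) ?_ ?_
    fun r hr => (hpow r hr).symm
  · filter_upwards [ae_restrict_mem measurableSet_Ioi] with l hl
    exact ((isPositiveType_exp_neg_mul (mem_Ioi.1 hl).le).const_mul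
      (Real.rpow_nonneg (mem_Ioi.1 hl).le _)).const_mul (inv_nonneg.2 hΓ.le)
  · intro T hT
    rw [integrable_prod_iff (by fun_prop)]
    constructor
    · filter_upwards [ae_restrict_mem measurableSet_Ioc] with r hr
      have := integrableOn_rpow_mul_exp_neg_mul_rpow (s := α - 1) (by linarith) one_pos hr.1
      simpa [K, neg_mul] using this.integrable.const_mul (Real.Gamma α)⁻¹
    · have hrpow : IntegrableOn (fun r : ℝ => r ^ (-α)) (Ioc 0 T) :=
        (intervalIntegrable_iff_integrableOn_Ioc_of_le hT.le).1
          (intervalIntegral.intervalIntegrable_rpow' (by linarith [hα.2]))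
      refine hrpow.congr_fun (fun r hr => ?_) measurableSet_Ioc
      simp only [← hpow r hr.1]
      refine setIntegral_congr_fun measurableSet_Ioi fun l hl => ?_
      exact (Real.norm_of_nonneg (hnonneg r l hl)).symm

lemma integrable_restrict_prod_of_support_subset {X E : Type*} [TopologicalSpace X]
    [MeasurableSpace X] [OpensMeasurableSpace X] [T2Space X] {μ : Measure X}
    [IsFiniteMeasureOnCompacts μ] [SFinite μ] [NormedAddCommGroup E] {f : ℝ → X → E}
    {a b : ℝ} {K : Set X} (hK : IsCompact K)
    (hf : ContinuousOn (Function.uncurry f) (Icc a b ×ˢ K))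
    (hsupp : ∀ t ∈ Icc a b, Function.support (f t) ⊆ K) :
    Integrable (Function.uncurry f) ((volume.restrict (Icc a b)).prod μ) := by
  have hbox : IntegrableOn (Function.uncurry f) (Icc a b ×ˢ K) (volume.prod μ) :=
    hf.integrableOn_compact (isCompact_Icc.prod hK)
  have hslab : IntegrableOn (Function.uncurry f) (Icc a b ×ˢ univ) (volume.prod μ) := by
    refine hbox.of_forall_sdiff_eq_zero (measurableSet_Icc.prod MeasurableSet.univ) ?_
    rintro ⟨t, x⟩ ⟨⟨ht, -⟩, hx⟩
    exact Function.notMem_support.1 fun h => hx ⟨ht, hsupp t ht h⟩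
  rwa [IntegrableOn, ← Measure.prod_restrict, Measure.restrict_univ] at hslab

section PartialDerivatives

variable {n : ℕ} {f g : (Fin n → ℝ) → ℝ} {i : Fin n} {x : Fin n → ℝ}

lemma partialD_eq_fderiv (hf : DifferentiableAt ℝ f x) :
    partialD f i x = fderiv ℝ f x (Pi.single i 1) := by
  rw [← Function.update_eq_self i x] at hf
  have h := (hf.hasFDerivAt.comp_hasDerivAt (x i) (hasDerivAt_update x i (x i))).deriv
  rwa [Function.update_eq_self] at h

lemma partialD_mul (hf : DifferentiableAt ℝ f x) (hg : DifferentiableAt ℝ g x) :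
    partialD (fun y => f y * g y) i x = f x * partialD g i x + partialD f i x * g x := by
  rw [partialD_eq_fderiv hf, partialD_eq_fderiv hg, partialD_eq_fderiv (hf.fun_mul hg),
    fderiv_fun_mul hf hg]
  simp [mul_comm]

lemma secondPartial_eq_partialD_partialD :
    secondPartial f i x = partialD (partialD f i) i x := by
  simp [secondPartial, partialD]

lemma support_partialD_subset : Function.support (partialD f i) ⊆ tsupport f := by
  intro x
  contrapose!
  intro hx
  have hf : ∀ᶠ y in nhds (Function.update x i (x i)), f y = 0 := by
    rw [Function.update_eq_self]
    exact notMem_tsupport_iff_eventuallyEq.1 hx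
  have hline : (fun s => f (Function.update x i s)) =ᶠ[nhds (x i)] fun _ => 0 :=
    (hasDerivAt_update x i (x i)).continuousAt.eventually hf
  rw [Function.notMem_support, partialD, hline.deriv_eq, deriv_const]

lemma integral_partialD_eq_zero (hf : ContDiff ℝ 1 f) (hsupp : HasCompactSupport f) :
    ∫ x, partialD f i x = 0 := by
  have hfd := hf.differentiable one_ne_zero
  have hf' : Integrable fun x => fderiv ℝ f x (Pi.single i 1) :=
    ((hf.continuous_fderiv one_ne_zero).clm_apply continuous_const).integrable_of_hasCompactSupport
      (hsupp.fderiv_apply ℝ _)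
  have hparts := integral_mul_fderiv_eq_neg_fderiv_mul_of_integrable (μ := volume)
    (f := fun _ : Fin n → ℝ => (1 : ℝ)) (g := f) (v := Pi.single i 1) (by simp) (by simpa)
    (by simpa using hf.continuous.integrable_of_hasCompactSupport hsupp) (by fun_prop)
    (fun x _ => hfd x)
  simp only [partialD_eq_fderiv (hfd _)]
  simpa using hparts

end PartialDerivatives

/-- The time derivative `∂ₜu`, again as a function of time and space so that it can be iterated. -/
noncomputable def timeD {X : Type*} (u : ℝ → X → ℝ) (t : ℝ) (x : X) : ℝ :=
  deriv (fun s => u s x) t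

section SpaceTimeDerivatives

open Function

lemma support_timeD_subset {X : Type*} {u : ℝ → X → ℝ} {a b : ℝ} (hab : a < b) {S : Set X}
    (hu : ∀ x, Differentiable ℝ fun s => u s x) (hsupp : ∀ t ∈ Icc a b, support (u t) ⊆ S)
    {t : ℝ} (ht : t ∈ Icc a b) : support (timeD u t) ⊆ S := by
  intro x
  contrapose!
  intro hx
  have hzero : ∀ s ∈ Icc a b, u s x = 0 := fun s hs => notMem_support.1 fun h => hx (hsupp s hs h)
  rw [notMem_support, timeD, ← (hu x t).derivWithin (uniqueDiffOn_Icc hab t ht),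
    derivWithin_congr hzero (hzero t ht), derivWithin_fun_const, Pi.zero_apply]

lemma fderiv_fderiv_apply_comm {E F : Type*} [NormedAddCommGroup E] [NormedSpace ℝ E]
    [NormedAddCommGroup F] [NormedSpace ℝ F] {f : E → F} {p : E} (hf : ContDiffAt ℝ 2 f p)
    (v w : E) :
    fderiv ℝ (fun q => fderiv ℝ f q v) p w = fderiv ℝ (fun q => fderiv ℝ f q w) p v := by
  have hdiff : DifferentiableAt ℝ (fderiv ℝ f) p :=
    (hf.fderiv_right (m := 1) (by norm_num)).differentiableAt one_ne_zero
  have happly (v w : E) : fderiv ℝ (fun q => fderiv ℝ f q v) p w = fderiv ℝ (fderiv ℝ f) p w v := by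
    simp [fderiv_clm_apply hdiff (differentiableAt_const v)]
  rw [happly, happly]
  exact (hf.isSymmSndFDerivAt (by simp)).eq w v

section NormedSpace

variable {X : Type*} [NormedAddCommGroup X] [NormedSpace ℝ X] {u : ℝ → X → ℝ}

lemma contDiff_slice {m : WithTop ℕ∞} (hu : ContDiff ℝ m (uncurry u)) (t : ℝ) :
    ContDiff ℝ m (u t) :=
  hu.comp (contDiff_prodMk_right t)

lemma hasDerivAt_timeD (hu : Differentiable ℝ (uncurry u)) (t : ℝ) (x : X) :
    HasDerivAt (fun s => u s x) (timeD u t x) t :=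
  (hu.comp (by fun_prop : Differentiable ℝ fun s : ℝ => (s, x)) t).hasDerivAt

lemma uncurry_timeD_eq_fderiv (hu : Differentiable ℝ (uncurry u)) :
    uncurry (timeD u) = fun p => fderiv ℝ (uncurry u) p (1, 0) := by
  ext ⟨t, x⟩
  have hline : HasDerivAt (fun s : ℝ => (s, x)) (1, 0) t :=
    (hasDerivAt_id t).prodMk (hasDerivAt_const t x)
  exact ((hu (t, x)).hasFDerivAt.comp_hasDerivAt t hline).deriv

lemma contDiff_timeD {m : WithTop ℕ∞} (hu : ContDiff ℝ (m + 1) (uncurry u)) :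
    ContDiff ℝ m (uncurry (timeD u)) := by
  rw [uncurry_timeD_eq_fderiv (hu.differentiable (by simp))]
  exact (hu.fderiv_right le_rfl).clm_apply contDiff_const

end NormedSpace

variable {n : ℕ} {u : ℝ → (Fin n → ℝ) → ℝ} {i : Fin n}

lemma uncurry_partialD_eq_fderiv (hu : Differentiable ℝ (uncurry u)) :
    (uncurry fun t => partialD (u t) i) =
      fun p => fderiv ℝ (uncurry u) p (0, Pi.single i 1) := by
  ext ⟨t, x⟩
  have hslice : HasFDerivAt (u t) _ x :=
    (hu (t, x)).hasFDerivAt.comp x (hasFDerivAt_prodMk_right t x)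
  simp [partialD_eq_fderiv hslice.differentiableAt, hslice.fderiv]

lemma contDiff_partialD {m : WithTop ℕ∞} (hu : ContDiff ℝ (m + 1) (uncurry u)) :
    ContDiff ℝ m (uncurry fun t => partialD (u t) i) := by
  rw [uncurry_partialD_eq_fderiv (hu.differentiable (by simp))]
  exact (hu.fderiv_right le_rfl).clm_apply contDiff_const

lemma timeD_partialD_comm (hu : ContDiff ℝ 2 (uncurry u)) {t : ℝ} {x : Fin n → ℝ} :
    timeD (fun s => partialD (u s) i) t x = partialD (timeD u t) i x := by
  have hd := hu.differentiable two_ne_zero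
  have hd_time := (contDiff_timeD (m := 1) hu).differentiable one_ne_zero
  have hd_space := (contDiff_partialD (m := 1) (i := i) hu).differentiable one_ne_zero
  calc timeD (fun s => partialD (u s) i) t x
      = fderiv ℝ (fun p => fderiv ℝ (uncurry u) p (0, Pi.single i 1)) (t, x) (1, 0) := by
        rw [← uncurry_partialD_eq_fderiv hd]
        exact congrFun (uncurry_timeD_eq_fderiv hd_space) (t, x)
    _ = fderiv ℝ (fun p => fderiv ℝ (uncurry u) p (1, 0)) (t, x) (0, Pi.single i 1) :=
        fderiv_fderiv_apply_comm hu.contDiffAt _ _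
    _ = partialD (timeD u t) i x := by
        rw [← uncurry_timeD_eq_fderiv hd]
        exact (congrFun (uncurry_partialD_eq_fderiv hd_time) (t, x)).symm

end SpaceTimeDerivatives

section EnergyBalance

open Function

/-- The integrand of `energy`. -/
noncomputable def energyDensity {n : ℕ} (c : (Fin n → ℝ) → ℝ) (u : ℝ → (Fin n → ℝ) → ℝ)
    (t : ℝ) (x : Fin n → ℝ) : ℝ :=
  ((c x) ^ 2)⁻¹ * timeD u t x ^ 2 + ∑ i, partialD (u t) i x ^ 2

/-- The `i`-th component of `∂ₜu ∇u`, which is the energy flux of the wave equation up to the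
factor `-2`. -/
noncomputable def energyFlux {n : ℕ} (u : ℝ → (Fin n → ℝ) → ℝ) (i : Fin n) (t : ℝ)
    (x : Fin n → ℝ) : ℝ :=
  timeD u t x * partialD (u t) i x

/-- The spatial divergence of `energyFlux`. -/
noncomputable def fluxDiv {n : ℕ} (u : ℝ → (Fin n → ℝ) → ℝ) (t : ℝ) (x : Fin n → ℝ) : ℝ :=
  ∑ i, partialD (energyFlux u i t) i x

variable {n : ℕ} {c : (Fin n → ℝ) → ℝ} {u : ℝ → (Fin n → ℝ) → ℝ} {i : Fin n} {t : ℝ}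
  {x : Fin n → ℝ}

lemma contDiff_energyFlux {m : WithTop ℕ∞} (hu : ContDiff ℝ (m + 1) (uncurry u)) :
    ContDiff ℝ m (uncurry (energyFlux u i)) :=
  (contDiff_timeD hu).mul (contDiff_partialD hu)

lemma support_energyFlux_subset : support (energyFlux u i t) ⊆ tsupport (u t) :=
  (support_mul_subset_right _ _).trans support_partialD_subset

lemma support_fluxDiv_subset : support (fluxDiv u t) ⊆ tsupport (u t) := by
  have hsupp (i : Fin n) : support (partialD (energyFlux u i t) i) ⊆ tsupport (u t) :=
    support_partialD_subset.trans (closure_minimal support_energyFlux_subset (isClosed_tsupport _))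
  intro x
  contrapose!
  exact fun hx => notMem_support.2 <|
    Finset.sum_eq_zero fun i _ => notMem_support.1 fun h => hx (hsupp i h)

lemma continuous_fluxDiv (hu : ContDiff ℝ 2 (uncurry u)) : Continuous (uncurry (fluxDiv u)) :=
  continuous_finsetSum Finset.univ fun i _ =>
    (contDiff_partialD (m := 0) (i := i) (contDiff_energyFlux (m := 1) hu)).continuous

lemma fluxDiv_eq (hu : ContDiff ℝ 2 (uncurry u)) :
    fluxDiv u t x = timeD u t x * laplacian (u t) x +
      ∑ i, timeD (fun s => partialD (u s) i) t x * partialD (u t) i x := by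
  have hslice {w : ℝ → (Fin n → ℝ) → ℝ} (hw : ContDiff ℝ 1 (uncurry w)) :
      DifferentiableAt ℝ (w t) x :=
    (contDiff_slice hw t).differentiable one_ne_zero x
  rw [fluxDiv, laplacian, Finset.mul_sum, ← Finset.sum_add_distrib]
  refine Finset.sum_congr rfl fun i _ => ?_
  rw [secondPartial_eq_partialD_partialD, timeD_partialD_comm hu]
  exact partialD_mul (hslice (contDiff_timeD hu)) (hslice (contDiff_partialD hu))

lemma hasDerivAt_energyDensity (hu : ContDiff ℝ 2 (uncurry u)) :
    HasDerivAt (fun s => energyDensity c u s x)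
      (2 * fluxDiv u t x +
        2 * timeD u t x * (((c x) ^ 2)⁻¹ * timeD (timeD u) t x - laplacian (u t) x)) t := by
  have hderiv_sq {w : ℝ → (Fin n → ℝ) → ℝ} (hw : ContDiff ℝ 1 (uncurry w)) :
      HasDerivAt (fun s => w s x ^ 2) (2 * (timeD w t x * w t x)) t := by
    convert! (hasDerivAt_timeD (hw.differentiable one_ne_zero) t x).pow 2 using 1
    ring
  have hkin := (hderiv_sq (contDiff_timeD hu)).const_mul ((c x) ^ 2)⁻¹
  have hpot := HasDerivAt.fun_sum fun i (_ : i ∈ Finset.univ) =>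
    hderiv_sq (contDiff_partialD (i := i) hu)
  convert! hkin.add hpot using 1
  rw [fluxDiv_eq hu, ← Finset.mul_sum]
  ring

lemma integral_fluxDiv_eq_zero (hu : ContDiff ℝ 2 (uncurry u)) (hsupp : HasCompactSupport (u t)) :
    ∫ x, fluxDiv u t x = 0 := by
  have hflux (i : Fin n) : ContDiff ℝ 1 (uncurry (energyFlux u i)) := contDiff_energyFlux hu
  have hflux_supp (i : Fin n) : HasCompactSupport (energyFlux u i t) :=
    hsupp.mono' support_energyFlux_subset
  simp only [fluxDiv]
  rw [integral_finsetSum]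
  · exact Finset.sum_eq_zero fun i _ =>
      integral_partialD_eq_zero (contDiff_slice (hflux i) t) (hflux_supp i)
  · intro i _
    have hcont : Continuous (partialD (energyFlux u i t) i) :=
      (contDiff_slice (contDiff_partialD (m := 0) (hflux i)) t).continuous
    exact hcont.integrable_of_hasCompactSupport ((hflux_supp i).mono' support_partialD_subset)

lemma integrable_energyDensity (hc : LocallyIntegrable fun x => ((c x) ^ 2)⁻¹)
    (hu : ContDiff ℝ 1 (uncurry u)) (hsupp : HasCompactSupport (u t))
    (hsupp_timeD : HasCompactSupport (timeD u t)) : Integrable (energyDensity c u t) := by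
  have hcont {w : ℝ → (Fin n → ℝ) → ℝ} (hw : ContDiff ℝ 0 (uncurry w)) :
      Continuous fun x => w t x ^ 2 := (contDiff_slice hw t).continuous.pow 2
  have hcs_sq {f : (Fin n → ℝ) → ℝ} (hf : HasCompactSupport f) :
      HasCompactSupport fun x => f x ^ 2 :=
    hf.comp_left (g := fun y : ℝ => y ^ 2) (zero_pow two_ne_zero)
  have hkin : Integrable fun x => ((c x) ^ 2)⁻¹ * timeD u t x ^ 2 :=
    hc.integrable_smul_right_of_hasCompactSupport (hcont (contDiff_timeD hu)) (hcs_sq hsupp_timeD)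
  have hpot (i : Fin n) : Integrable fun x => partialD (u t) i x ^ 2 :=
    (hcont (contDiff_partialD hu)).integrable_of_hasCompactSupport
      (hcs_sq (hsupp.mono' support_partialD_subset))
  exact hkin.add (integrable_finsetSum _ fun i _ => hpot i)

lemma continuous_laplacian (hu : ContDiff ℝ 2 (uncurry u)) :
    Continuous (uncurry fun t => laplacian (u t)) := by
  have hsum : (uncurry fun t => laplacian (u t)) =
      fun p => ∑ i, (uncurry fun t => partialD (partialD (u t) i) i) p := by
    ext ⟨t, x⟩
    simp only [uncurry_apply_pair, laplacian, secondPartial_eq_partialD_partialD]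
  rw [hsum]
  exact continuous_finsetSum Finset.univ fun i _ =>
    (contDiff_partialD (m := 0) (contDiff_partialD (m := 1) hu)).continuous

lemma energyDensity_sub_eq (hu : ContDiff ℝ 2 (uncurry u)) (t₀ t₁ : ℝ) :
    energyDensity c u t₁ x - energyDensity c u t₀ x = 2 * (∫ t in t₀..t₁, fluxDiv u t x) +
      ∫ t in t₀..t₁,
        2 * timeD u t x * (((c x) ^ 2)⁻¹ * timeD (timeD u) t x - laplacian (u t) x) := by
  have hline {w : ℝ → (Fin n → ℝ) → ℝ} (hw : Continuous (uncurry w)) :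
      Continuous fun t => w t x :=
    hw.comp (Continuous.prodMk_left x)
  have hflux : Continuous fun t => 2 * fluxDiv u t x :=
    continuous_const.mul (hline (continuous_fluxDiv hu))
  have htime : ContDiff ℝ 1 (uncurry (timeD u)) := contDiff_timeD hu
  have htime₂ : ContDiff ℝ 0 (uncurry (timeD (timeD u))) := contDiff_timeD htime
  have hres : Continuous fun t =>
      2 * timeD u t x * (((c x) ^ 2)⁻¹ * timeD (timeD u) t x - laplacian (u t) x) :=
    (continuous_const.mul (hline htime.continuous)).mul
      ((continuous_const.mul (hline htime₂.continuous)).sub (hline (continuous_laplacian hu)))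
  rw [← intervalIntegral.integral_const_mul,
    ← intervalIntegral.integral_add (hflux.intervalIntegrable _ _) (hres.intervalIntegrable _ _)]
  exact (intervalIntegral.integral_eq_sub_of_hasDerivAt (fun t _ => hasDerivAt_energyDensity hu)
    ((hflux.add hres).intervalIntegrable _ _)).symm

lemma energyDensity_sub_le {k : ℝ → ℝ} (hk : IsPositiveType k) {T b : ℝ} (hT : 0 < T) (hb : 0 ≤ b)
    (hc : c x ≠ 0) (hu : ContDiff ℝ 2 (uncurry u))
    (hpde : ∀ t ∈ Ioo 0 T, timeD (timeD u) t x - (c x) ^ 2 * laplacian (u t) x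
      + b * ∫ s in (0 : ℝ)..t, k (t - s) * timeD u s x = 0) :
    energyDensity c u T x - energyDensity c u 0 x ≤ 2 * ∫ t in (0 : ℝ)..T, fluxDiv u t x := by
  have hv : Continuous fun t => timeD u t x :=
    (contDiff_timeD (m := 1) hu).continuous.comp (Continuous.prodMk_left x)
  have hdamping :
      ∫ t in (0 : ℝ)..T,
        2 * timeD u t x * (((c x) ^ 2)⁻¹ * timeD (timeD u) t x - laplacian (u t) x) =
      -(2 * ((c x) ^ 2)⁻¹ * b *
        ∫ t in (0 : ℝ)..T, timeD u t x * ∫ s in (0 : ℝ)..t, k (t - s) * timeD u s x) := by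
    rw [← intervalIntegral.integral_const_mul, ← intervalIntegral.integral_neg]
    simp only [intervalIntegral.integral_of_le hT.le, integral_Ioc_eq_integral_Ioo]
    refine setIntegral_congr_fun measurableSet_Ioo fun t ht => ?_
    have hcancel : ((c x) ^ 2)⁻¹ * (c x) ^ 2 = 1 := inv_mul_cancel₀ (pow_ne_zero 2 hc)
    linear_combination (2 * timeD u t x * ((c x) ^ 2)⁻¹) * hpde t ht +
      (2 * timeD u t x * laplacian (u t) x) * hcancel
  rw [energyDensity_sub_eq hu, hdamping]
  have hwork := hk _ hv T hT
  have : 0 ≤ 2 * ((c x) ^ 2)⁻¹ * b := by positivity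
  exact add_le_of_nonpos_right (neg_nonpos.2 (mul_nonneg this hwork))

theorem energy_le_of_isPositiveType {k : ℝ → ℝ} (hk : IsPositiveType k) {T : ℝ} (hT : 0 < T)
    {a : (Fin n → ℝ) → ℝ} (hc : ∀ x, c x ≠ 0) (hc_int : LocallyIntegrable fun x => ((c x) ^ 2)⁻¹)
    (ha : ∀ x, 0 ≤ a x) (hu : ContDiff ℝ 2 (uncurry u)) {K : Set (Fin n → ℝ)} (hK : IsCompact K)
    (hsupp : ∀ t ∈ Icc 0 T, support (u t) ⊆ K)
    (hpde : ∀ t ∈ Ioo 0 T, ∀ x, timeD (timeD u) t x - (c x) ^ 2 * laplacian (u t) x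
      + a x * ∫ s in (0 : ℝ)..t, k (t - s) * timeD u s x = 0) :
    energy c u T ≤ energy c u 0 := by
  have htsupp : ∀ t ∈ Icc 0 T, tsupport (u t) ⊆ K := fun t ht =>
    closure_minimal (hsupp t ht) hK.isClosed
  have hdensity : ∀ t ∈ Icc 0 T, Integrable (energyDensity c u t) := fun t ht =>
    integrable_energyDensity hc_int (hu.of_le one_le_two)
      (.of_support_subset_isCompact hK (hsupp t ht))
      (.of_support_subset_isCompact hK <| support_timeD_subset hT
        (fun x s => (hasDerivAt_timeD (hu.differentiable two_ne_zero) s x).differentiableAt)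
        hsupp ht)
  have hint₀ := hdensity 0 (left_mem_Icc.2 hT.le)
  have hintT := hdensity T (right_mem_Icc.2 hT.le)
  have hflux : Integrable (uncurry (fluxDiv u)) ((volume.restrict (uIoc 0 T)).prod volume) := by
    rw [uIoc_of_le hT.le, restrict_Ioc_eq_restrict_Icc]
    exact integrable_restrict_prod_of_support_subset hK
      (continuous_fluxDiv hu).continuousOn fun t ht => support_fluxDiv_subset.trans (htsupp t ht)
  have hflux_time : Integrable fun x => 2 * ∫ t in (0 : ℝ)..T, fluxDiv u t x := by
    simp only [intervalIntegral.integral_of_le hT.le, ← uIoc_of_le hT.le]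
    exact hflux.integral_prod_right.const_mul 2
  have hflux_zero : ∫ x, ∫ t in (0 : ℝ)..T, fluxDiv u t x = 0 := by
    rw [← intervalIntegral_integral_swap hflux]
    refine intervalIntegral.integral_zero_ae (.of_forall fun t ht => ?_)
    rw [uIoc_of_le hT.le] at ht
    exact integral_fluxDiv_eq_zero hu (.of_support_subset_isCompact hK
      (hsupp t (Ioc_subset_Icc_self ht)))
  rw [← sub_nonpos]
  calc energy c u T - energy c u 0
      = ∫ x, (energyDensity c u T x - energyDensity c u 0 x) := (integral_sub hintT hint₀).symm
    _ ≤ ∫ x, 2 * ∫ t in (0 : ℝ)..T, fluxDiv u t x :=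
        integral_mono (hintT.sub hint₀) hflux_time fun x =>
          energyDensity_sub_le hk hT (ha x) (hc x) hu fun t ht => hpde t ht x
    _ = 0 := by rw [integral_const_mul, hflux_zero, mul_zero]

end EnergyBalance

theorem energy_dissipation_fracWave_general {n : ℕ} {α T : ℝ} (hα : α ∈ Ico (0 : ℝ) 1) (hT : 0 < T)
    {c a : (Fin n → ℝ) → ℝ} (hc : ∀ x, c x ≠ 0)
    (hc_int : LocallyIntegrable fun x => ((c x) ^ 2)⁻¹) (ha : ∀ x, 0 ≤ a x)
    {u : ℝ → (Fin n → ℝ) → ℝ} (hu : ContDiff ℝ 2 fun p : ℝ × (Fin n → ℝ) => u p.1 p.2)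
    {K : Set (Fin n → ℝ)} (hK : IsCompact K) (hsupp : ∀ t ∈ Icc 0 T, Function.support (u t) ⊆ K)
    (hpde : ∀ t ∈ Ioo 0 T, ∀ x,
      deriv (fun s => deriv (fun r => u r x) s) t - (c x) ^ 2 * laplacian (u t) x
        + a x * caputo α (fun s => u s x) t = 0) :
    energy c u T ≤ energy c u 0 := by
  have hΓ : 0 ≤ 1 / Real.Gamma (1 - α) :=
    one_div_nonneg.2 (Real.Gamma_pos_of_pos (sub_pos.2 hα.2)).le
  refine energy_le_of_isPositiveType ((isPositiveType_rpow_neg hα).const_mul hΓ) hT hc hc_int ha hu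
    hK hsupp fun t ht x => ?_
  simp only [mul_assoc, intervalIntegral.integral_const_mul]
  exact hpde t ht x

/-- Dissipativity of the fractionally attenuated wave equation: `E(T) ≤ E(0)`. -/
theorem energy_dissipation_fracWave {n : ℕ} (hn : 1 ≤ n) (α T : ℝ) (hα : α ∈ Ioo (0:ℝ) 1)
    (hT : 0 < T) (c a : (Fin n → ℝ) → ℝ) (c₀ : ℝ) (hc₀ : 0 < c₀)
    (hc : ContDiff ℝ (⊤ : ℕ∞) c) (hcge : ∀ x, c₀ ≤ c x)
    (ha : ContDiff ℝ (⊤ : ℕ∞) a) (hage : ∀ x, 0 ≤ a x)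
    (u : ℝ → (Fin n → ℝ) → ℝ)
    (hu : ContDiff ℝ (⊤ : ℕ∞) (fun p : ℝ × (Fin n → ℝ) => u p.1 p.2))
    (K : Set (Fin n → ℝ)) (hK : IsCompact K)
    (hsupp : ∀ t ∈ Icc (0:ℝ) T, Function.support (u t) ⊆ K)
    (hpde : ∀ t ∈ Ioo (0:ℝ) T, ∀ x,
      deriv (fun s => deriv (fun r => u r x) s) t - (c x) ^ 2 * laplacian (u t) x
        + a x * caputo α (fun s => u s x) t = 0) :
    energy c u T ≤ energy c u 0 := by
  have hc_ne : ∀ x, c x ≠ 0 := fun x => (hc₀.trans_le (hcge x)).ne'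
  exact energy_dissipation_fracWave_general (Ioo_subset_Ico_self hα) hT hc_ne
    ((hc.continuous.pow 2).inv₀ fun x => pow_ne_zero 2 (hc_ne x)).locallyIntegrable hage
    (hu.of_le (by norm_cast)) hK hsupp hpde
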